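/- If D is a digraph such that the incidence poset P(D) has a unique maximal element and w(P(D)) ≥ 2, then the catch leafage equals the width: l*(D) = w(P(D)). -/

import Mathlib

/-- A subtree representation of a digraph with edge relation `E` on vertex type `V`
in a host graph `T` on vertex type `W`: each digraph vertex `v` gets a source set
`src v` and a sink set `snk v`, each inducing a connected (hence nonempty) subgraph
of `T`, such that `E u v` holds iff `src u` meets `snk v`. -/
structure SubtreeRep {V W : Type} (E : V → V → Prop) (T : SimpleGraph W) where
  src : V → Set W
  snk : V → Set W
  src_connected : ∀ v, (T.induce (src v)).Connected
  snk_connected : ∀ v, (T.induce (snk v)).Connected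
  rep : ∀ u v, E u v ↔ (src u ∩ snk v).Nonempty

/-- The set of leaves (vertices of degree 1) of a graph. -/
def treeLeaves {W : Type} (T : SimpleGraph W) : Set W :=
  {w | (T.neighborSet w).ncard = 1}

/-- The leafage of a digraph: the minimum number of leaves of a finite host tree in
which the digraph has a subtree representation. -/
noncomputable def digLeafage {V : Type} (E : V → V → Prop) : ℕ :=
  sInf {k | ∃ (W : Type) (_ : Fintype W) (T : SimpleGraph W),
    T.IsTree ∧ Nonempty (SubtreeRep E T) ∧ (treeLeaves T).ncard = k}

/-- The catch leafage of a digraph: the minimum number of leaves of a finite host tree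
in which the digraph has a subtree representation all of whose sink sets are single
vertices. -/
noncomputable def catchLeafage {V : Type} (E : V → V → Prop) : ℕ :=
  sInf {k | ∃ (W : Type) (_ : Fintype W) (T : SimpleGraph W) (R : SubtreeRep E T),
    T.IsTree ∧ (∀ v, ∃ x, R.snk v = {x}) ∧ (treeLeaves T).ncard = k}

/-- `C` is between `A` and `B` in `T`: `A` and `B` are disjoint and the unique path of
`T` from `A` to `B` (i.e. the path meeting `A` only at its first vertex and `B` only
at its last vertex) contains a vertex of `C` (possibly an endpoint). -/
def Between {W : Type} (T : SimpleGraph W) (A B C : Set W) : Prop :=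
  A ∩ B = ∅ ∧ ∃ (a b : W) (p : T.Walk a b), a ∈ A ∧ b ∈ B ∧ p.IsPath ∧
    (∀ x ∈ p.support, x ∈ A → x = a) ∧ (∀ x ∈ p.support, x ∈ B → x = b) ∧
    ∃ x ∈ C, x ∈ p.support

/-- An asteroidal collection of sets in `T`: pairwise disjoint, and no member is
between two other members. -/
def Asteroidal {W ι : Type} (T : SimpleGraph W) (F : ι → Set W) : Prop :=
  (∀ i j, i ≠ j → F i ∩ F j = ∅) ∧
  ∀ i j k, i ≠ j → i ≠ k → j ≠ k → ¬ Between T (F i) (F j) (F k)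

/-- The star `K_{1,n}`: the center `none` is adjacent to the `n` leaves `some i`. -/
def starGraph (n : ℕ) : SimpleGraph (Option (Fin n)) :=
  SimpleGraph.fromRel (fun a _ => a = none)

/-- A Ferrers digraph: the successor sets are linearly ordered by inclusion. -/
def IsFerrers {V : Type} (F : V → V → Prop) : Prop :=
  ∀ u u' : V, {v | F u v} ⊆ {v | F u' v} ∨ {v | F u' v} ⊆ {v | F u v}

/-- The Ferrers dimension `f(D)`: the minimum number of Ferrers digraphs whose
intersection is `E`. -/
noncomputable def ferrersDim {V : Type} (E : V → V → Prop) : ℕ :=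
  sInf {k | ∃ F : Fin k → V → V → Prop,
    (∀ i, IsFerrers (F i)) ∧ (∀ u v, E u v ↔ ∀ i, F i u v)}

/-- `f*(D)`: the minimum number of pairwise edge-disjoint Ferrers digraphs whose
union is the complement of `E` in `V × V`. -/
noncomputable def fstar {V : Type} (E : V → V → Prop) : ℕ :=
  sInf {k | ∃ F : Fin k → V → V → Prop,
    (∀ i, IsFerrers (F i)) ∧
    (∀ i j, i ≠ j → ∀ u v, ¬ (F i u v ∧ F j u v)) ∧
    (∀ u v, ¬ E u v ↔ ∃ i, F i u v)}

/-- The width of the incidence poset `P(D)`: the maximum size of an antichain (under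
inclusion) of predecessor sets of the digraph `E`. -/
noncomputable def incWidth {V : Type} (E : V → V → Prop) : ℕ :=
  sSup {k | ∃ A : Finset (Set V),
    (↑A : Set (Set V)) ⊆ Set.range (fun v => {u | E u v}) ∧
    IsAntichain (· ⊆ ·) (↑A : Set (Set V)) ∧ A.card = k}

/-- The digraph `D_n` with adjacency matrix `J - I`: all pairs of distinct vertices. -/
def DnRel (n : ℕ) (i j : Fin n) : Prop := i ≠ j

/-- The digraph `E_n` with adjacency matrix `[[I, Y], [Yᵀ, 0]]` (vertex `n-1` playing
the role of the last row/column). -/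
def EnRel (n : ℕ) (i j : Fin n) : Prop :=
  (i.val < n - 1 ∧ j.val < n - 1 ∧ i = j) ∨
  (i.val < n - 1 ∧ j.val = n - 1) ∨
  (i.val = n - 1 ∧ j.val < n - 1)

/-- The digraph `C_n`: a directed `n`-cycle plus a loop at each vertex. -/
def CnRel (n : ℕ) (i j : Fin n) : Prop := j = i ∨ j.val = (i.val + 1) % n

/-- The digraph `M_{k,m}` on `Fin k × Fin m`: identity diagonal blocks, all-ones
blocks above the diagonal, all-zeros blocks below. -/
def MkmRel (k m : ℕ) (p q : Fin k × Fin m) : Prop :=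
  p.1 < q.1 ∨ (p.1 = q.1 ∧ p.2 = q.2)

/-- The digraph `F_n` with adjacency matrix `[[I, Y], [Yᵀ, 1]]` (vertex `n-1` playing
the role of the last row/column). -/
def FnRel (n : ℕ) (i j : Fin n) : Prop := i = j ∨ i.val = n - 1 ∨ j.val = n - 1

/-- The digraph `P_n`: a directed path `1 → 2 → ⋯ → n` plus a loop at each vertex. -/
def PnRel (n : ℕ) (i j : Fin n) : Prop := j = i ∨ j.val = i.val + 1

/-- **Dilworth's theorem**, as a colouring: a finite set whose antichains have at most `n` elements
can be coloured with `n` colours such that each colour class is a chain. -/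
theorem exists_chain_coloring {α : Type*} [PartialOrder α] (s : Finset α) (n : ℕ)
    (h : ∀ A ⊆ s, IsAntichain (· ≤ ·) (A : Set α) → A.card ≤ n) :
    ∃ f : α → ℕ, (∀ x ∈ s, f x < n) ∧
      ∀ x ∈ s, ∀ y ∈ s, f x = f y → x ≤ y ∨ y ≤ x := by
  classical
  induction s using Finset.strongInduction generalizing n with
  | H s ih =>
  rcases s.eq_empty_or_nonempty with rfl | hs
  · exact ⟨fun _ => 0, by simp, by simp⟩
  obtain ⟨a, ha, hamax⟩ := s.exists_maximal hs
  obtain ⟨A₀, hA₀, hA₀max⟩ := Finset.exists_max_image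
    ((s.erase a).powerset.filter fun A : Finset α => IsAntichain (· ≤ ·) (A : Set α)) Finset.card
    ⟨∅, by simp⟩
  simp only [Finset.mem_filter, Finset.mem_powerset] at hA₀ hA₀max
  set k := A₀.card
  have hkn : k ≤ n := h A₀ (hA₀.1.trans (Finset.erase_subset _ _)) hA₀.2
  obtain ⟨f, hfk, hf⟩ := ih (s.erase a) (Finset.erase_ssubset ha) k
    fun A hA hAanti => hA₀max A ⟨hA, hAanti⟩
  -- A largest antichain meets every colour class.
  have hits : ∀ A ⊆ s.erase a, IsAntichain (· ≤ ·) (A : Set α) → A.card = k →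
      ∀ i < k, ∃ z ∈ A, f z = i := by
    intro A hA hAanti hcard i hi
    have hinj : Set.InjOn f A := by
      intro x hx y hy hxy
      rcases hf x (hA hx) y (hA hy) hxy with hle | hle
      · exact hAanti.eq hx hy hle
      · exact (hAanti.eq hy hx hle).symm
    have himg : A.image f = Finset.range k := by
      refine Finset.eq_of_subset_of_card_le ?_ ?_
      · intro j hj
        obtain ⟨x, hx, rfl⟩ := Finset.mem_image.1 hj
        exact Finset.mem_range.2 (hfk x (hA hx))
      · rw [Finset.card_image_of_injOn hinj, hcard, Finset.card_range]
    have : i ∈ A.image f := himg ▸ Finset.mem_range.2 hi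
    simpa using this
  -- The topmost element of each colour lying in some largest antichain.
  have top : ∀ i < k, ∃ x, (∃ A ⊆ s.erase a, IsAntichain (· ≤ ·) (A : Set α) ∧ A.card = k ∧
      x ∈ A) ∧ f x = i ∧ ∀ A ⊆ s.erase a, IsAntichain (· ≤ ·) (A : Set α) → A.card = k →
      ∀ z ∈ A, f z = i → z ≤ x := by
    intro i hi
    obtain ⟨z₀, hz₀, hfz₀⟩ := hits A₀ hA₀.1 hA₀.2 rfl i hi
    obtain ⟨x, hx, hxmax⟩ := Finset.exists_maximal
      (s := (s.erase a).filter fun z => f z = i ∧ ∃ A ⊆ s.erase a,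
        IsAntichain (· ≤ ·) (A : Set α) ∧ A.card = k ∧ z ∈ A)
      ⟨z₀, Finset.mem_filter.2 ⟨hA₀.1 hz₀, hfz₀, A₀, hA₀.1, hA₀.2, rfl, hz₀⟩⟩
    obtain ⟨hxs, hxi, hxA⟩ := Finset.mem_filter.1 hx
    refine ⟨x, hxA, hxi, fun A hA hAanti hAcard z hz hzi => ?_⟩
    rcases hf z (hA hz) x hxs (hzi.trans hxi.symm) with hle | hle
    · exact hle
    · exact hxmax (Finset.mem_filter.2 ⟨hA hz, hzi, A, hA, hAanti, hAcard, hz⟩) hle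
  have : Nonempty α := ⟨a⟩
  choose! x hxA hxf hxtop using top
  have hxs : ∀ i < k, x i ∈ s.erase a := by
    intro i hi
    obtain ⟨A, hA, -, -, hxi⟩ := hxA i hi
    exact hA hxi
  have hxanti : ∀ i < k, ∀ j < k, x j ≤ x i → i = j := by
    intro i hi j hj hle
    obtain ⟨A, hA, hAanti, hAcard, hxi⟩ := hxA i hi
    obtain ⟨y, hy, hyj⟩ := hits A hA hAanti hAcard j hj
    have hyx : y = x i := hAanti.eq hy hxi ((hxtop j hj A hA hAanti hAcard y hy hyj).trans hle)
    rw [← hyj, hyx, hxf i hi]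
  by_cases hcomp : ∃ i < k, x i ≤ a
  · obtain ⟨i, hi, hia⟩ := hcomp
    set K := s.filter fun z => z = a ∨ (f z = i ∧ z ≤ x i) with hK
    have haK : a ∈ K := by simp [hK, ha]
    have hsub : s \ K ⊆ s.erase a := by
      intro z hz
      obtain ⟨hzs, hzK⟩ := Finset.mem_sdiff.1 hz
      exact Finset.mem_erase.2 ⟨fun hza => hzK (hza ▸ haK), hzs⟩
    obtain ⟨g, hgk, hg⟩ := ih (s \ K)
      ⟨Finset.sdiff_subset, fun hss => (Finset.mem_sdiff.1 (hss ha)).2 haK⟩ (k - 1) (by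
        intro A hA hAanti
        have hle : A.card ≤ k := hA₀max A ⟨hA.trans hsub, hAanti⟩
        have hne : A.card ≠ k := by
          intro hcard
          obtain ⟨z, hz, hzi⟩ := hits A (hA.trans hsub) hAanti hcard i hi
          have hzx := hxtop i hi A (hA.trans hsub) hAanti hcard z hz hzi
          obtain ⟨hzs, hzK⟩ := Finset.mem_sdiff.1 (hA hz)
          exact hzK (Finset.mem_filter.2 ⟨hzs, Or.inr ⟨hzi, hzx⟩⟩)
        omega)
    have hKchain : ∀ y ∈ K, ∀ z ∈ K, y ≤ z ∨ z ≤ y := by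
      intro y hy z hz
      obtain ⟨hys, hy⟩ := Finset.mem_filter.1 hy
      obtain ⟨hzs, hz⟩ := Finset.mem_filter.1 hz
      by_cases hya : y = a
      · rcases hz with rfl | ⟨-, hz⟩
        · exact Or.inl hya.le
        · exact Or.inr (hya ▸ hz.trans hia)
      by_cases hza : z = a
      · rcases hy with rfl | ⟨-, hy⟩
        · exact absurd rfl hya
        · exact Or.inl (hza ▸ hy.trans hia)
      exact hf y (Finset.mem_erase.2 ⟨hya, hys⟩) z (Finset.mem_erase.2 ⟨hza, hzs⟩)
        ((hy.resolve_left hya).1.trans (hz.resolve_left hza).1.symm)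
    refine ⟨fun z => if z ∈ K then k - 1 else g z, ?_, ?_⟩
    · intro z hz
      by_cases hzK : z ∈ K
      · simp only [hzK, if_true]; omega
      · have := hgk z (Finset.mem_sdiff.2 ⟨hz, hzK⟩)
        simp only [hzK, if_false]; omega
    · intro y hy z hz
      by_cases hyK : y ∈ K <;> by_cases hzK : z ∈ K <;>
        simp only [hyK, hzK, if_true, if_false] <;> intro hyz
      · exact hKchain y hyK z hzK
      · have := hgk z (Finset.mem_sdiff.2 ⟨hz, hzK⟩)
        omega
      · have := hgk y (Finset.mem_sdiff.2 ⟨hy, hyK⟩)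
        omega
      · exact hg y (Finset.mem_sdiff.2 ⟨hy, hyK⟩) z (Finset.mem_sdiff.2 ⟨hz, hzK⟩) hyz
  · push Not at hcomp
    have hlarge : k + 1 ≤ n := by
      have hinj : Set.InjOn x (Finset.range k : Set ℕ) := by
        intro i hi j hj hij
        exact hxanti i (by simpa using hi) j (by simpa using hj) hij.ge
      have hnot : a ∉ (Finset.range k).image x := by
        intro hmem
        obtain ⟨i, hi, hxi⟩ := Finset.mem_image.1 hmem
        exact hcomp i (Finset.mem_range.1 hi) hxi.le
      have := h (insert a ((Finset.range k).image x)) (by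
        intro z hz
        rcases Finset.mem_insert.1 hz with rfl | hz
        · exact ha
        · obtain ⟨i, hi, rfl⟩ := Finset.mem_image.1 hz
          exact Finset.mem_of_mem_erase (hxs i (Finset.mem_range.1 hi))) (by
        intro y hy z hz hne hle
        simp only [Finset.coe_insert, Finset.coe_image, Finset.coe_range, Set.mem_insert_iff,
          Set.mem_image, Set.mem_Iio] at hy hz
        rcases hy with rfl | ⟨i, hi, rfl⟩ <;> rcases hz with rfl | ⟨j, hj, rfl⟩
        · exact hne rfl
        · exact hcomp j hj (hamax (Finset.mem_of_mem_erase (hxs j hj)) hle)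
        · exact hcomp i hi hle
        · exact hne (by rw [hxanti j hj i hi hle]))
      rwa [Finset.card_insert_of_notMem hnot, Finset.card_image_of_injOn hinj,
        Finset.card_range] at this
    refine ⟨fun z => if z = a then k else f z, ?_, ?_⟩
    · intro z hz
      by_cases hza : z = a
      · simp only [hza, if_true]; omega
      · have := hfk z (Finset.mem_erase.2 ⟨hza, hz⟩)
        simp only [hza, if_false]; omega
    · intro y hy z hz
      by_cases hya : y = a <;> by_cases hza : z = a <;>
        simp only [hya, hza, if_true, if_false] <;> intro hyz
      · exact Or.inl le_rfl
      · have := hfk z (Finset.mem_erase.2 ⟨hza, hz⟩)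
        omega
      · have := hfk y (Finset.mem_erase.2 ⟨hya, hy⟩)
        omega
      · exact hf y (Finset.mem_erase.2 ⟨hya, hy⟩) z (Finset.mem_erase.2 ⟨hza, hz⟩) hyz

namespace SimpleGraph

variable {W : Type*}

/-- The graph joining every vertex to its parent. -/
def parentGraph (par : W → W) : SimpleGraph W :=
  SimpleGraph.fromRel fun x y => par x = y

/-- If iterating `par` within `S` always leads to `root`, the graph induced on `S` is connected. -/
theorem parentGraph_induce_connected {par : W → W} {root : W} {rank : W → ℕ}
    (hrank : ∀ x, x ≠ root → rank (par x) < rank x) {S : Set W} (hroot : root ∈ S)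
    (hS : ∀ x ∈ S, x ≠ root → par x ∈ S) : ((parentGraph par).induce S).Connected := by
  have key : ∀ n, ∀ x : S, rank x = n →
      ((parentGraph par).induce S).Reachable x ⟨root, hroot⟩ := by
    intro n
    induction n using Nat.strong_induction_on with
    | _ n ih =>
    rintro ⟨x, hx⟩ hn
    by_cases hxr : x = root
    · subst hxr; exact Reachable.refl _
    · have hlt := hrank x hxr
      have hadj : ((parentGraph par).induce S).Adj ⟨x, hx⟩ ⟨par x, hS x hx hxr⟩ := by
        simp only [comap_adj, Function.Embedding.subtype_apply, parentGraph, fromRel_adj]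
        exact ⟨fun he => by rw [← he] at hlt; exact lt_irrefl _ hlt, Or.inl trivial⟩
      exact hadj.reachable.trans (ih _ (hn ▸ hlt) ⟨par x, hS x hx hxr⟩ rfl)
  exact (connected_iff_exists_forall_reachable _).2 ⟨⟨root, hroot⟩, fun x => (key _ x rfl).symm⟩

theorem parentGraph_isTree [Finite W] {par : W → W} {root : W} {rank : W → ℕ}
    (hrank : ∀ x, x ≠ root → rank (par x) < rank x) (hroot : par root = root) :
    (parentGraph par).IsTree := by
  have hconn : (parentGraph par).Connected := by
    have := parentGraph_induce_connected hrank (Set.mem_univ root) (fun _ _ _ => Set.mem_univ _)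
    exact (induceUnivIso _).connected_iff.1 this
  refine isTree_iff_connected_and_card.2 ⟨hconn, le_antisymm ?_
    hconn.card_vert_le_card_edgeSet_add_one⟩
  have hsub : (parentGraph par).edgeSet ⊆ (fun x => s(x, par x)) '' {root}ᶜ := by
    intro e
    induction e using Sym2.ind with
    | _ x y =>
    simp only [mem_edgeSet, parentGraph, fromRel_adj]
    rintro ⟨hne, rfl | rfl⟩
    · exact ⟨x, fun hx => hne (by rw [Set.mem_singleton_iff.1 hx, hroot]), rfl⟩
    · exact ⟨y, fun hy => hne (by rw [Set.mem_singleton_iff.1 hy, hroot]), Sym2.eq_swap⟩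
  have h₁ := (Set.ncard_le_ncard hsub (Set.toFinite _)).trans
    (Set.ncard_image_le (Set.toFinite _))
  have h₂ := Set.ncard_add_ncard_compl ({root} : Set W)
  rw [Set.ncard_singleton] at h₂
  rw [Nat.card_coe_set_eq]
  omega

/-- In a forest, a path lies in every connected set containing its ends. -/
theorem IsAcyclic.support_subset_of_induce_connected {T : SimpleGraph W} (hT : T.IsAcyclic)
    {S : Set W} (hS : (T.induce S).Connected) {a b : W} (ha : a ∈ S) (hb : b ∈ S)
    {p : T.Walk a b} (hp : p.IsPath) : ∀ x ∈ p.support, x ∈ S := by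
  obtain ⟨q, hq⟩ := (hS.preconnected ⟨a, ha⟩ ⟨b, hb⟩).exists_isPath
  have hq' : (q.map (Embedding.induce S).toHom).IsPath :=
    hq.map Subtype.val_injective
  have heq : p = q.map (Embedding.induce S).toHom :=
    congrArg Subtype.val ((hT.subsingleton_path a b).elim ⟨p, hp⟩ ⟨_, hq'⟩)
  have hsupp : p.support = q.support.map (Embedding.induce S).toHom :=
    (congrArg Walk.support heq).trans (Walk.support_map _ _)
  intro x hx
  rw [hsupp] at hx
  obtain ⟨y, -, rfl⟩ := List.mem_map.1 hx
  exact y.2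

/-- In a finite tree, a vertex `x ≠ c` lies on a path from `c` to a vertex with a single
neighbour. -/
theorem IsTree.exists_path_to_leaf [Finite W] {T : SimpleGraph W} (hT : T.IsTree) {c x : W}
    (hcx : x ≠ c) : ∃ (l : W) (p : T.Walk c l), p.IsPath ∧ x ∈ p.support ∧
      (T.neighborSet l).ncard = 1 := by
  classical
  have := Fintype.ofFinite W
  let Q : ℕ → Prop := fun n => ∃ (l : W) (p : T.Walk c l), p.IsPath ∧ x ∈ p.support ∧ p.length = n
  obtain ⟨p₀, hp₀⟩ := (hT.1.preconnected c x).exists_isPath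
  have hQ₀ : Q p₀.length := ⟨x, p₀, hp₀, p₀.end_mem_support, rfl⟩
  have hbound : ∀ n, Q n → n ≤ Fintype.card W := by
    rintro n ⟨l, p, hp, -, rfl⟩
    exact hp.length_lt.le
  obtain ⟨l, p, hp, hxp, hlen⟩ := Nat.findGreatest_spec (P := Q) (hbound _ hQ₀) hQ₀
  have hnil : ¬ p.Nil := by
    intro hn
    have := Walk.nil_iff_support_eq.1 hn
    rw [this] at hxp
    exact hcx (by simpa using hxp)
  refine ⟨l, p, hp, hxp, Set.ncard_eq_one.2 ⟨p.penultimate, Set.eq_singleton_iff_unique_mem.2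
    ⟨(p.adj_penultimate hnil).symm, fun y hy => ?_⟩⟩⟩
  replace hy : T.Adj l y := hy
  by_cases hyp : y ∈ p.support
  · exact hT.isAcyclic.eq_penultimate_of_adj_end hp hy hyp
  · have hQ : Q (p.length + 1) := ⟨y, p.concat hy, hp.concat hyp hy, by
      rw [Walk.support_concat]; simp [hxp], by simp⟩
    have := Nat.le_findGreatest (hbound _ hQ) hQ
    omega

/-- Of two vertices on a path, one lies on an initial segment ending in the other. -/
theorem Walk.IsPath.exists_isPath_mem_support {T : SimpleGraph W} {c l x y : W} {p : T.Walk c l}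
    (hp : p.IsPath) (hx : x ∈ p.support) (hy : y ∈ p.support) :
    (∃ q : T.Walk c y, q.IsPath ∧ x ∈ q.support) ∨
      ∃ q : T.Walk c x, q.IsPath ∧ y ∈ q.support := by
  classical
  by_cases hyx : y ∈ (p.takeUntil x hx).support
  · exact Or.inr ⟨_, hp.takeUntil hx, hyx⟩
  · have hspec := p.take_spec hx
    have hyd : y ∈ (p.dropUntil x hx).support := by
      rw [← hspec, Walk.mem_support_append_iff] at hy
      exact hy.resolve_left hyx
    have hpath : ((p.takeUntil x hx).append ((p.dropUntil x hx).takeUntil y hyd)).IsPath := by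
      have h := hp
      rw [← hspec, ← (p.dropUntil x hx).take_spec hyd, Walk.append_assoc] at h
      exact h.of_append_left
    exact Or.inl ⟨_, hpath, by simp [Walk.mem_support_append_iff]⟩

end SimpleGraph

/-- The parent of a vertex in the spider with `w` legs of `n + 1` vertices attached to the centre
`none`; `some (i, j)` is the vertex of leg `i` at distance `j + 1` from the centre. -/
def spiderParent {w n : ℕ} : Option (Fin w × Fin (n + 1)) → Option (Fin w × Fin (n + 1))
  | none => none
  | some (i, j) => if j.val = 0 then none else some (i, ⟨j.val - 1, by omega⟩)

/-- The distance to the centre in the spider. -/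
def spiderRank {w n : ℕ} : Option (Fin w × Fin (n + 1)) → ℕ
  | none => 0
  | some (_, j) => j.val + 1

theorem spiderRank_parent_lt {w n : ℕ} (x : Option (Fin w × Fin (n + 1))) (hx : x ≠ none) :
    spiderRank (spiderParent x) < spiderRank x := by
  rcases x with _ | ⟨i, j⟩
  · exact absurd rfl hx
  · by_cases hj : j.val = 0
    · simp [spiderParent, spiderRank, hj]
    · simp only [spiderParent, spiderRank, hj, if_false]
      omega

theorem spider_isTree (w n : ℕ) :
    (SimpleGraph.parentGraph (spiderParent (w := w) (n := n))).IsTree :=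
  SimpleGraph.parentGraph_isTree spiderRank_parent_lt rfl

/-- The spider with `w ≥ 2` legs has at most `w` leaves. -/
theorem ncard_treeLeaves_spider_le {w : ℕ} (n : ℕ) (hw : 2 ≤ w) :
    (treeLeaves (SimpleGraph.parentGraph (spiderParent (w := w) (n := n)))).ncard ≤ w := by
  have hsub : treeLeaves (SimpleGraph.parentGraph (spiderParent (w := w) (n := n))) ⊆
      (fun i : Fin w => some (i, Fin.last n)) '' Set.univ := by
    intro x hx
    obtain ⟨y, hy⟩ := Set.ncard_eq_one.1 hx
    have huniq : ∀ z, (SimpleGraph.parentGraph spiderParent).Adj x z → z = y := fun z hz =>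
      Set.mem_singleton_iff.1 (hy ▸ hz)
    have hchild : ∀ z, z ≠ none → spiderParent z = x → z = y := by
      rintro z hz rfl
      refine huniq z ((SimpleGraph.fromRel_adj _ _ _).2 ⟨fun he => ?_, Or.inr rfl⟩)
      have := spiderRank_parent_lt z hz
      rw [he] at this
      exact lt_irrefl _ this
    rcases x with _ | ⟨i, j⟩
    · have h₀ := hchild (some (⟨0, by omega⟩, 0)) (by simp) (by simp [spiderParent])
      have h₁ := hchild (some (⟨1, by omega⟩, 0)) (by simp) (by simp [spiderParent])
      have := h₀.trans h₁.symm
      simp at this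
    · by_cases hj : j = Fin.last n
      · exact ⟨i, Set.mem_univ i, by rw [hj]⟩
      · have hjn : j.val < n := Fin.val_lt_last hj
        have hlt := spiderRank_parent_lt (some (i, j)) (by simp)
        have h₀ := huniq (spiderParent (some (i, j))) ((SimpleGraph.fromRel_adj _ _ _).2
          ⟨fun he => by rw [← he] at hlt; exact lt_irrefl _ hlt, Or.inl rfl⟩)
        have h₁ := hchild (some (i, ⟨j.val + 1, by omega⟩)) (by simp) (by simp [spiderParent])
        rw [h₀, ← h₁] at hlt
        simp only [spiderRank] at hlt
        omega
  calc _ ≤ _ := Set.ncard_le_ncard hsub (Set.toFinite _)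
    _ ≤ (Set.univ : Set (Fin w)).ncard := Set.ncard_image_le (Set.toFinite _)
    _ = w := by rw [Set.ncard_univ, Nat.card_fin]

/-- If some predecessor set contains all others, the leaves of the host tree of a catch
representation are at least as many as the elements of any antichain of predecessor sets. -/
theorem card_le_ncard_treeLeaves {V W : Type} [Finite W] {E : V → V → Prop} {T : SimpleGraph W}
    (hT : T.IsTree) (R : SubtreeRep E T) (hR : ∀ v, ∃ x, R.snk v = {x}) {v₀ : V}
    (hv₀ : ∀ v : V, {u | E u v} ⊆ {u | E u v₀}) {A : Finset (Set V)}
    (hA : (↑A : Set (Set V)) ⊆ Set.range (fun v => {u | E u v}))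
    (hanti : IsAntichain (· ⊆ ·) (↑A : Set (Set V))) (hcard : 2 ≤ A.card) :
    A.card ≤ (treeLeaves T).ncard := by
  choose x hx using hR
  have hrep : ∀ u v, E u v ↔ x v ∈ R.src u := by
    intro u v
    rw [R.rep, hx, Set.inter_singleton_nonempty]
  have hA' : ∀ B ∈ A, ∃ v, {u | E u v} = B := fun B hB => hA hB
  have : Nonempty V := ⟨v₀⟩
  have : Nonempty W := ⟨x v₀⟩
  choose! g hg using hA'
  have hmem : ∀ B ∈ A, ∀ u, u ∈ B ↔ x (g B) ∈ R.src u := by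
    intro B hB u
    rw [← hrep]
    exact (Set.ext_iff.1 (hg B hB) u).symm
  have hcentre : ∀ B ∈ A, ∀ u ∈ B, x v₀ ∈ R.src u := by
    intro B hB u hu
    rw [← hg B hB] at hu
    exact (hrep _ _).1 (hv₀ _ hu)
  have hpath : ∀ B ∈ A, ∀ C ∈ A, ∀ q : T.Walk (x v₀) (x (g C)), q.IsPath →
      x (g B) ∈ q.support → C = B := by
    intro B hB C hC q hq hBq
    refine hanti.eq hC hB fun u hu => ?_
    exact (hmem B hB u).2 (hT.isAcyclic.support_subset_of_induce_connected (R.src_connected u)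
      (hcentre C hC u hu) ((hmem C hC u).1 hu) hq _ hBq)
  have hne : ∀ B ∈ A, x (g B) ≠ x v₀ := by
    intro B hB heq
    obtain ⟨C, hC, hCB⟩ := Finset.exists_mem_ne (show 1 < A.card by omega) B
    exact hCB (hanti.eq hC hB fun u hu => (hmem B hB u).2 (heq ▸ hcentre C hC u hu))
  have hleaf : ∀ B ∈ A, ∃ l, (T.neighborSet l).ncard = 1 ∧
      ∃ p : T.Walk (x v₀) l, p.IsPath ∧ x (g B) ∈ p.support := by
    intro B hB
    obtain ⟨l, p, hp, hxp, hl⟩ := hT.exists_path_to_leaf (hne B hB)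
    exact ⟨l, hl, p, hp, hxp⟩
  choose! l hl hlp using hleaf
  rw [← Set.ncard_coe_finset A]
  refine Set.ncard_le_ncard_of_injOn l (fun B hB => hl B hB) ?_ (Set.toFinite _)
  intro B hB C hC hBC
  obtain ⟨p, hp, hBp⟩ := hlp B hB
  have hCl := hlp C hC
  rw [← hBC] at hCl
  obtain ⟨q, hq, hCp⟩ := hCl
  obtain rfl : q = p :=
    congrArg Subtype.val ((hT.isAcyclic.subsingleton_path _ _).elim ⟨q, hq⟩ ⟨p, hp⟩)
  rcases hp.exists_isPath_mem_support hBp hCp with ⟨r, hr, hBr⟩ | ⟨r, hr, hCr⟩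
  · exact (hpath B hB C hC r hr hBr).symm
  · exact hpath C hC B hB r hr hCr

/-- A colouring of the predecessor sets by `w ≥ 2` colours whose classes are chains gives a catch
representation in the spider with `w` legs, provided some predecessor set contains all others. -/
theorem exists_spider_catch_rep {V : Type} [Fintype V] {E : V → V → Prop} {v₀ : V}
    (hv₀ : ∀ v : V, {u | E u v} ⊆ {u | E u v₀}) {w : ℕ} (hw : 2 ≤ w) (f : V → Fin w)
    (hf : ∀ v v', f v = f v' → {u | E u v} ⊆ {u | E u v'} ∨ {u | E u v'} ⊆ {u | E u v}) :
    ∃ R : SubtreeRep E (SimpleGraph.parentGraph (spiderParent (w := w) (n := Fintype.card V))),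
      ∀ v, ∃ x, R.snk v = {x} := by
  classical
  have single : ∀ x : Option (Fin w × Fin (Fintype.card V + 1)),
      ((SimpleGraph.parentGraph spiderParent).induce {x}).Connected := fun x =>
    SimpleGraph.Connected.of_subsingleton
  let pos : V → Fin (Fintype.card V + 1) := fun v =>
    ⟨Fintype.card V - {u | E u v}.ncard, by omega⟩
  have hle : ∀ v, {u | E u v}.ncard ≤ Fintype.card V := fun v => by
    rw [← Nat.card_eq_fintype_card]; exact Set.ncard_le_card _
  let reach : V → Set (Option (Fin w × Fin (Fintype.card V + 1))) := fun u =>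
    {x | ∀ i j, x = some (i, j) → ∃ v, E u v ∧ f v = i ∧ j ≤ pos v}
  refine ⟨{ src := fun u => if E u v₀ then reach u else {some (⟨0, by omega⟩, 0)}
            snk := fun v => {some (f v, pos v)}
            src_connected := fun u => ?_
            snk_connected := fun v => single _
            rep := fun u v => ?_ }, fun v => ⟨_, rfl⟩⟩
  · by_cases hu : E u v₀
    · rw [if_pos hu]
      refine SimpleGraph.parentGraph_induce_connected spiderRank_parent_lt
        (by simp [reach]) ?_
      rintro (_ | ⟨i, j⟩) hx hne
      · exact absurd rfl hne
      · obtain ⟨v, huv, hvi, hjv⟩ := hx i j rfl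
        rintro i' j' heq
        by_cases hj : j.val = 0
        · simp [spiderParent, hj] at heq
        · simp only [spiderParent, hj, if_false, Option.some.injEq, Prod.mk.injEq] at heq
          obtain ⟨rfl, rfl⟩ := heq
          exact ⟨v, huv, hvi, le_trans (by simp [Fin.le_def]) hjv⟩
    · rw [if_neg hu]
      exact single _
  · rw [Set.inter_singleton_nonempty]
    by_cases hu : E u v₀
    · simp only [hu, if_true]
      constructor
      · rintro huv i j heq
        simp only [Option.some.injEq, Prod.mk.injEq] at heq
        exact ⟨v, huv, heq.1, heq.2.ge⟩
      · intro hmem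
        obtain ⟨v', huv', hfv, hpos⟩ := hmem _ _ rfl
        have hcard : {u | E u v'}.ncard ≤ {u | E u v}.ncard := by
          have h₁ := hle v
          have h₂ := hle v'
          have : Fintype.card V - {u | E u v}.ncard ≤ Fintype.card V - {u | E u v'}.ncard := hpos
          omega
        rcases hf v v' hfv.symm with hsub | hsub
        · have heq := Set.eq_of_subset_of_ncard_le hsub hcard (Set.toFinite _)
          exact (Set.ext_iff.1 heq u).2 huv'
        · exact hsub huv'
    · simp only [hu, if_false, Set.mem_singleton_iff, Option.some.injEq, Prod.mk.injEq]
      refine ⟨fun huv => absurd (hv₀ v huv) hu, fun ⟨_, hpos⟩ => absurd ?_ hu⟩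
      have hval : Fintype.card V - {u | E u v}.ncard = 0 := congrArg Fin.val hpos
      have huniv : {u | E u v} = Set.univ := by
        refine Set.eq_of_subset_of_ncard_le (Set.subset_univ _) ?_ (Set.toFinite _)
        rw [Set.ncard_univ, Nat.card_eq_fintype_card]
        omega
      exact hv₀ v (huniv ▸ Set.mem_univ u)

/-- If the incidence poset `P(D)` has a unique maximal element (a
predecessor set containing all other predecessor sets) and `w(P(D)) ≥ 2`, then
`l*(D) = w(P(D))`. -/
theorem stmt_16 {V : Type} [Fintype V] (E : V → V → Prop)
    (hmax : ∃ v₀ : V, ∀ v : V, {u | E u v} ⊆ {u | E u v₀})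
    (hw : 2 ≤ incWidth E) :
    catchLeafage E = incWidth E := by
  classical
  obtain ⟨v₀, hv₀⟩ := hmax
  have hbdd : BddAbove {k | ∃ A : Finset (Set V),
      (↑A : Set (Set V)) ⊆ Set.range (fun v => {u | E u v}) ∧
      IsAntichain (· ⊆ ·) (↑A : Set (Set V)) ∧ A.card = k} := by
    refine ⟨Fintype.card (Set V), ?_⟩
    rintro k ⟨A, -, -, rfl⟩
    exact A.card_le_univ
  obtain ⟨A, hA, hanti, hcard⟩ : incWidth E ∈ {k | ∃ A : Finset (Set V),
      (↑A : Set (Set V)) ⊆ Set.range (fun v => {u | E u v}) ∧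
      IsAntichain (· ⊆ ·) (↑A : Set (Set V)) ∧ A.card = k} := by
    refine Nat.sSup_mem ?_ hbdd
    exact ⟨0, ∅, by simp, by simp, rfl⟩
  obtain ⟨f, hfw, hf⟩ := exists_chain_coloring (α := Set V)
    (Finset.univ.image fun v => {u | E u v}) (incWidth E) fun B hB hBanti =>
      le_csSup hbdd ⟨B, fun S hS => by simpa using hB hS, hBanti, rfl⟩
  have hmem : ∀ v, {u | E u v} ∈ Finset.univ.image fun v => {u | E u v} := fun v =>
    Finset.mem_image_of_mem _ (Finset.mem_univ v)
  obtain ⟨R, hR⟩ := exists_spider_catch_rep hv₀ hw (fun v => ⟨f {u | E u v}, hfw _ (hmem v)⟩)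
    fun v v' hvv' => hf _ (hmem v) _ (hmem v') (congrArg Fin.val hvv')
  have hspider : (treeLeaves (SimpleGraph.parentGraph
      (spiderParent (w := incWidth E) (n := Fintype.card V)))).ncard ∈
      {k | ∃ (W : Type) (_ : Fintype W) (T : SimpleGraph W) (R : SubtreeRep E T),
        T.IsTree ∧ (∀ v, ∃ x, R.snk v = {x}) ∧ (treeLeaves T).ncard = k} :=
    ⟨_, inferInstance, _, R, spider_isTree _ _, hR, rfl⟩
  refine le_antisymm ((Nat.sInf_le hspider).trans (ncard_treeLeaves_spider_le _ hw)) ?_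
  refine le_csInf ⟨_, hspider⟩ ?_
  rintro k ⟨W, _, T, R', hT, hR', rfl⟩
  rw [← hcard]
  exact card_le_ncard_treeLeaves hT R' hR' hv₀ hA hanti (hcard ▸ hw)
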